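/- Let 𝔫 be a 2-step nilpotent finite-dimensional real Lie algebra with inner product ⟨·,·⟩ admitting an invertible Killing–Yano tensor T. Then 𝔫 admits a bi-invariant orthogonal complex structure: there exists an endomorphism J of 𝔫 with J² = −Id, ⟨Jx,y⟩ = −⟨x,Jy⟩ (equivalently ⟨Jx,Jy⟩ = ⟨x,y⟩) for all x,y, and J⁅x,y⁆ = ⁅Jx,y⁆ for all x,y ∈ 𝔫. -/

import Mathlib

/-- `x` belongs to the center of the Lie algebra `V`. -/
def IsCentral {V : Type*} [LieRing V] (x : V) : Prop := ∀ y : V, ⁅x, y⁆ = 0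

/-- Membership in `𝔳 = 𝔷^⊥`, the orthogonal complement of the center with respect to the
inner product `B`. -/
def InVperp {V : Type*} [LieRing V] [LieAlgebra ℝ V]
    (B : V →ₗ[ℝ] V →ₗ[ℝ] ℝ) (x : V) : Prop :=
  ∀ z : V, IsCentral z → B x z = 0

/-- The Lie algebra `V` is 2-step nilpotent: non-abelian and `⁅⁅V,V⁆,V⁆ = 0`. -/
def TwoStepNilpotent (V : Type*) [LieRing V] : Prop :=
  (∃ x y : V, ⁅x, y⁆ ≠ 0) ∧ ∀ x y z : V, ⁅⁅x, y⁆, z⁆ = 0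

/-- A Killing–Yano tensor on `(V, B)`: a skew-symmetric endomorphism preserving the center
and satisfying `T⁅x,y⁆ = 3⁅Tx,y⁆` for `x, y ∈ 𝔳 = 𝔷^⊥`. -/
def IsKY {V : Type*} [LieRing V] [LieAlgebra ℝ V]
    (B : V →ₗ[ℝ] V →ₗ[ℝ] ℝ) (T : V →ₗ[ℝ] V) : Prop :=
  (∀ x y : V, B (T x) y = - B x (T y)) ∧
  (∀ z : V, IsCentral z → IsCentral (T z)) ∧
  (∀ x y : V, InVperp B x → InVperp B y → T ⁅x, y⁆ = (3 : ℝ) • ⁅T x, y⁆)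

/-- The Koszul formula characterizing the Levi-Civita product of `(V, B)`. -/
def IsLeviCivita {V : Type*} [LieRing V] [LieAlgebra ℝ V]
    (B : V →ₗ[ℝ] V →ₗ[ℝ] ℝ) (nab : V → V → V) : Prop :=
  ∀ x y z : V, 2 * B (nab x y) z = B ⁅x, y⁆ z - B ⁅y, z⁆ x + B ⁅z, x⁆ y

/-! A skew injective `T` has a polar decomposition `T = J |T|` with `|T| = √(-T²)`, and its
orthogonal factor `J` satisfies `J² = -1`. The factor `J` does not change when `T` is multiplied by
a positive scalar, so it commutes with every `X` for which `T X = c X T` with `c > 0`: such an `X`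
maps the `μ`-eigenspace of `-T²` to the `c²μ`-eigenspace, and there `J` is `T / √μ` and
`T / (c √μ)`, respectively. Central components drop out of all brackets, so a Killing–Yano tensor
satisfies `T⁅x, y⁆ = 3⁅T x, y⁆` on all of `𝔫`, and `c = 3` applies to `X = ⁅·, y⁆`. -/

open Polynomial

open scoped RealInnerProductSpace

section Eigenvectors

theorem exists_polynomial_eval_eq_of_hasEigenvalue {K M : Type*} [Field K] [AddCommGroup M]
    [Module K M] [FiniteDimensional K M] (A : Module.End K M) (f : K → K) :
    ∃ p : K[X], ∀ μ, A.HasEigenvalue μ → p.eval μ = f μ := by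
  classical
  have hfin : {μ | A.HasEigenvalue μ}.Finite := A.finite_hasEigenvalue
  exact ⟨Lagrange.interpolate hfin.toFinset id f, fun μ hμ ↦
    Lagrange.eval_interpolate_at_node f Function.injective_id.injOn (hfin.mem_toFinset.2 hμ)⟩

theorem ext_of_isSymmetric_of_eigenvectors {𝕜 E M : Type*} [RCLike 𝕜] [NormedAddCommGroup E]
    [InnerProductSpace 𝕜 E] [FiniteDimensional 𝕜 E] [AddCommGroup M] [Module 𝕜 M]
    {A : E →ₗ[𝕜] E} (hA : A.IsSymmetric) {f g : E →ₗ[𝕜] M}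
    (h : ∀ (μ : 𝕜) (x : E), x ≠ 0 → A x = μ • x → f x = g x) : f = g := by
  let b := hA.eigenvectorBasis rfl
  refine b.toBasis.ext fun i ↦ ?_
  rw [b.coe_toBasis]
  exact h _ _ (b.orthonormal.ne_zero i) (hA.apply_eigenvectorBasis rfl i)

theorem isSymmetric_aeval {E : Type*} [NormedAddCommGroup E] [InnerProductSpace ℝ E]
    {A : E →ₗ[ℝ] E} (hA : A.IsSymmetric) (p : ℝ[X]) : (aeval A p).IsSymmetric := by
  induction p using Polynomial.induction_on' with
  | add p q hp hq => simpa only [map_add] using hp.add hq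
  | monomial n a =>
    rw [aeval_monomial, ← Algebra.smul_def]
    exact (hA.pow n).smul (RCLike.conj_to_real)

theorem exists_isSymmetric_apply_eigenvector_eq {E : Type*} [NormedAddCommGroup E]
    [InnerProductSpace ℝ E] [FiniteDimensional ℝ E] {A : E →ₗ[ℝ] E} (hA : A.IsSymmetric)
    (f : ℝ → ℝ) :
    ∃ R : E →ₗ[ℝ] E, R.IsSymmetric ∧ ∀ (μ : ℝ) (x : E), A x = μ • x → R x = f μ • x := by
  obtain ⟨p, hp⟩ := exists_polynomial_eval_eq_of_hasEigenvalue A f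
  refine ⟨aeval A p, isSymmetric_aeval hA p, fun μ x hx ↦ ?_⟩
  obtain rfl | hx0 := eq_or_ne x 0
  · simp
  · have hev : Module.End.HasEigenvector A μ x := ⟨Module.End.mem_eigenspace_iff.2 hx, hx0⟩
    rw [Module.End.aeval_apply_of_hasEigenvector hev,
      hp μ (Module.End.hasEigenvalue_of_hasEigenvector hev)]

end Eigenvectors

section PolarPart

/-- `J` is the orthogonal factor of the polar decomposition `T = J |T|`, `|T| = √(-T²)`, of a
skew-symmetric endomorphism `T`. It is encoded by its values on the eigenvectors of `-T²`, which
span the space when `T` is skew-symmetric for some inner product. Since `(√0)⁻¹ = 0`, it vanishes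
on the kernel of `T²`. -/
def IsPolarPart {M : Type*} [AddCommGroup M] [Module ℝ M] (T J : M →ₗ[ℝ] M) : Prop :=
  ∀ (μ : ℝ) (x : M), -T (T x) = μ • x → J x = (√μ)⁻¹ • T x

variable {E : Type*} [NormedAddCommGroup E] [InnerProductSpace ℝ E] {T J : E →ₗ[ℝ] E}

theorem isSymmetric_neg_comp_self (hT : ∀ x y, ⟪T x, y⟫ = -⟪x, T y⟫) :
    (-(T ∘ₗ T)).IsSymmetric := fun x y ↦ by
  simp [hT]

theorem pos_of_neg_apply_apply_eq_smul (hT : ∀ x y, ⟪T x, y⟫ = -⟪x, T y⟫)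
    (hinj : Function.Injective T) {μ : ℝ} {x : E} (hx0 : x ≠ 0) (hx : -T (T x) = μ • x) :
    0 < μ := by
  have hTx : T x ≠ 0 := (map_ne_zero_iff T hinj).2 hx0
  have hnorm : ⟪T x, T x⟫ = μ * ⟪x, x⟫ := by
    rw [hT, ← inner_neg_right, hx, real_inner_smul_right]
  have hpos : 0 < μ * ⟪x, x⟫ := hnorm ▸ real_inner_self_pos.2 hTx
  exact pos_of_mul_pos_left hpos real_inner_self_nonneg

variable [FiniteDimensional ℝ E]

theorem exists_isPolarPart (hT : ∀ x y, ⟪T x, y⟫ = -⟪x, T y⟫) :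
    ∃ J : E →ₗ[ℝ] E, IsPolarPart T J ∧ ∀ x y, ⟪J x, y⟫ = -⟪x, J y⟫ := by
  have hA := isSymmetric_neg_comp_self hT
  obtain ⟨R, hR, hRev⟩ := exists_isSymmetric_apply_eigenvector_eq hA fun μ ↦ (√μ)⁻¹
  have hcomm : R ∘ₗ T = T ∘ₗ R := ext_of_isSymmetric_of_eigenvectors hA fun μ x _ hx ↦ by
    have hTx : (-(T ∘ₗ T)) (T x) = μ • T x := by
      rw [← map_smul, ← hx]
      simp
    rw [LinearMap.comp_apply, LinearMap.comp_apply, hRev μ x hx, hRev μ (T x) hTx, map_smul]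
  refine ⟨T ∘ₗ R, fun μ x hx ↦ ?_, fun x y ↦ ?_⟩
  · rw [LinearMap.comp_apply, hRev μ x hx, map_smul]
  · rw [LinearMap.comp_apply, hT, hR, ← LinearMap.comp_apply, hcomm]

theorem IsPolarPart.apply_apply (hJ : IsPolarPart T J) (hT : ∀ x y, ⟪T x, y⟫ = -⟪x, T y⟫)
    (hinj : Function.Injective T) (x : E) : J (J x) = -x := by
  suffices h : J ∘ₗ J = -LinearMap.id from LinearMap.congr_fun h x
  refine ext_of_isSymmetric_of_eigenvectors (isSymmetric_neg_comp_self hT) fun μ x hx0 hx ↦ ?_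
  have hμ : 0 < μ := pos_of_neg_apply_apply_eq_smul hT hinj hx0 hx
  have hTx : -T (T (T x)) = μ • T x := by
    rw [← map_neg, ← map_smul]
    exact congrArg T hx
  have hTTx : T (T x) = -(μ • x) := neg_eq_iff_eq_neg.1 hx
  calc J (J x) = (√μ)⁻¹ • (√μ)⁻¹ • T (T x) := by rw [hJ μ x hx, map_smul, hJ μ (T x) hTx]
    _ = -(((√μ)⁻¹ * (√μ)⁻¹ * μ) • x) := by rw [hTTx, smul_neg, smul_neg, smul_smul, smul_smul]
    _ = -x := by rw [← mul_inv, Real.mul_self_sqrt hμ.le, inv_mul_cancel₀ hμ.ne', one_smul]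

theorem IsPolarPart.apply_comm {M : Type*} [AddCommGroup M] [Module ℝ M] {S L : M →ₗ[ℝ] M}
    (hJ : IsPolarPart T J) (hL : IsPolarPart S L) (hT : ∀ x y, ⟪T x, y⟫ = -⟪x, T y⟫)
    {c : ℝ} (hc : 0 < c) {X : E →ₗ[ℝ] M} (hX : ∀ x, S (X x) = c • X (T x)) (x : E) :
    L (X x) = X (J x) := by
  suffices h : L ∘ₗ X = X ∘ₗ J from LinearMap.congr_fun h x
  refine ext_of_isSymmetric_of_eigenvectors (isSymmetric_neg_comp_self hT) fun μ x _ hx ↦ ?_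
  have hXx : -S (S (X x)) = (c ^ 2 * μ) • X x := by
    rw [hX, map_smul, hX, smul_smul, ← smul_neg, ← map_neg, ← sq, mul_smul, ← map_smul X μ]
    exact congrArg (fun v ↦ c ^ 2 • X v) hx
  calc L (X x) = (√(c ^ 2 * μ))⁻¹ • c • X (T x) := by rw [hL _ _ hXx, hX]
    _ = (√μ)⁻¹ • X (T x) := by
      rw [Real.sqrt_mul (sq_nonneg c), Real.sqrt_sq hc.le, smul_smul, mul_inv_rev, mul_assoc,
        inv_mul_cancel₀ hc.ne', mul_one]
    _ = X (J x) := by rw [hJ μ x hx, map_smul]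

end PolarPart

theorem isCompl_orthogonal_of_anisotropic {K V : Type*} [Field K] [AddCommGroup V] [Module K V]
    [FiniteDimensional K V] {B : LinearMap.BilinForm K V} (hrefl : B.IsRefl)
    (haniso : ∀ x, B x x = 0 → x = 0) (W : Submodule K V) : IsCompl W (B.orthogonal W) := by
  rw [LinearMap.BilinForm.isCompl_orthogonal_iff_disjoint hrefl, Submodule.disjoint_def]
  exact fun x hxW hx ↦ haniso x (hx x hxW)

section PositiveDefiniteForm

variable {V : Type*} [AddCommGroup V] [Module ℝ V] {B : V →ₗ[ℝ] V →ₗ[ℝ] ℝ}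

/-- The inner product given by a symmetric positive definite bilinear form; it makes the spectral
theorem available for the form. -/
@[reducible] def innerProductCore (hsymm : ∀ x y : V, B x y = B y x)
    (hpos : ∀ x : V, x ≠ 0 → 0 < B x x) : InnerProductSpace.Core ℝ V where
  inner x y := B x y
  conj_inner_symm x y := hsymm y x
  re_inner_nonneg x := by
    obtain rfl | hx := eq_or_ne x 0
    · simp
    · exact (hpos x hx).le
  add_left x y z := by simp
  smul_left x y r := by simp
  definite x h := by_contra fun hx ↦ (hpos x hx).ne' h

variable [FiniteDimensional ℝ V]

theorem exists_skew_complexStructure_commuting (hsymm : ∀ x y : V, B x y = B y x)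
    (hpos : ∀ x : V, x ≠ 0 → 0 < B x x) {T : V →ₗ[ℝ] V}
    (hT : ∀ x y : V, B (T x) y = -B x (T y)) (hinj : Function.Injective T) :
    ∃ J : V →ₗ[ℝ] V, (∀ x, J (J x) = -x) ∧ (∀ x y, B (J x) y = -B x (J y)) ∧
      ∀ (c : ℝ) (X : V →ₗ[ℝ] V), 0 < c → (∀ x, T (X x) = c • X (T x)) →
        ∀ x, J (X x) = X (J x) := by
  let core := innerProductCore hsymm hpos
  let : NormedAddCommGroup V := core.toNormedAddCommGroup
  let : InnerProductSpace ℝ V := InnerProductSpace.ofCore core.toCore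
  obtain ⟨J, hJ, hskew⟩ := exists_isPolarPart hT
  exact ⟨J, hJ.apply_apply hT hinj, hskew, fun c X hc hX ↦ hJ.apply_comm hJ hT hc hX⟩

end PositiveDefiniteForm

section KillingYano

variable {V : Type*} [LieRing V] [LieAlgebra ℝ V] [FiniteDimensional ℝ V]
  {B : V →ₗ[ℝ] V →ₗ[ℝ] ℝ} {T : V →ₗ[ℝ] V}

theorem exists_isCentral_add_inVperp (hsymm : ∀ x y : V, B x y = B y x)
    (hpos : ∀ x : V, x ≠ 0 → 0 < B x x) (x : V) :
    ∃ z v : V, IsCentral z ∧ InVperp B v ∧ z + v = x := by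
  have mem_center (z : V) : z ∈ LieAlgebra.center ℝ V ↔ IsCentral z := by
    rw [LieModule.mem_maxTrivSubmodule]
    exact forall_congr' fun y ↦ by rw [← lie_skew, neg_eq_zero]
  have hcompl := isCompl_orthogonal_of_anisotropic (B := B) (fun x y h ↦ (hsymm y x).trans h)
    (fun x h ↦ by_contra fun hx ↦ (hpos x hx).ne' h) (LieAlgebra.center ℝ V).toSubmodule
  obtain ⟨z, v, hz, hv, hzv⟩ := Submodule.codisjoint_iff_exists_add_eq.1 hcompl.codisjoint x
  exact ⟨z, v, (mem_center z).1 hz,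
    fun w hw ↦ (hsymm v w).trans (hv w ((mem_center w).2 hw)), hzv⟩

theorem IsKY.apply_lie (hT : IsKY B T) (hsymm : ∀ x y : V, B x y = B y x)
    (hpos : ∀ x : V, x ≠ 0 → 0 < B x x) (x y : V) : T ⁅x, y⁆ = (3 : ℝ) • ⁅T x, y⁆ := by
  obtain ⟨-, hcenter, hperp⟩ := hT
  obtain ⟨z, v, hz, hv, rfl⟩ := exists_isCentral_add_inVperp hsymm hpos x
  obtain ⟨w, u, hw, hu, rfl⟩ := exists_isCentral_add_inVperp hsymm hpos y
  have lie_w (a : V) : ⁅a, w⁆ = 0 := by rw [← lie_skew, hw, neg_zero]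
  calc T ⁅z + v, w + u⁆ = T ⁅v, u⁆ := by rw [add_lie, hz, zero_add, lie_add, lie_w, zero_add]
    _ = (3 : ℝ) • ⁅T v, u⁆ := hperp v u hv hu
    _ = (3 : ℝ) • ⁅T (z + v), w + u⁆ := by
      rw [map_add, add_lie, hcenter z hz, zero_add, lie_add, lie_w, zero_add]

theorem statement_9_general (hsymm : ∀ x y : V, B x y = B y x)
    (hpos : ∀ x : V, x ≠ 0 → 0 < B x x) (hskew : ∀ x y : V, B (T x) y = -B x (T y))
    (hinj : Function.Injective T) {c : ℝ} (hc : 0 < c)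
    (hlie : ∀ x y : V, T ⁅x, y⁆ = c • ⁅T x, y⁆) :
    ∃ J : V →ₗ[ℝ] V, (∀ x : V, J (J x) = -x) ∧
      (∀ x y : V, B (J x) y = -B x (J y)) ∧
      (∀ x y : V, B (J x) (J y) = B x y) ∧
      (∀ x y : V, J ⁅x, y⁆ = ⁅J x, y⁆) := by
  obtain ⟨J, hJJ, hJ, hcomm⟩ := exists_skew_complexStructure_commuting hsymm hpos hskew hinj
  refine ⟨J, hJJ, hJ, fun x y ↦ ?_, fun x y ↦ ?_⟩
  · rw [hJ, hJJ, map_neg, neg_neg]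
  · let bracketWith : V →ₗ[ℝ] V := (LieModule.toEnd ℝ V V : V →ₗ[ℝ] V →ₗ[ℝ] V).flip y
    exact hcomm c bracketWith hc (fun a ↦ hlie a y) x

end KillingYano

/-- a 2-step nilpotent metric Lie algebra with an invertible KY tensor
admits a bi-invariant orthogonal complex structure. -/
theorem statement_9 (V : Type*) [LieRing V] [LieAlgebra ℝ V] [FiniteDimensional ℝ V]
    (B : V →ₗ[ℝ] V →ₗ[ℝ] ℝ)
    (hsymm : ∀ x y : V, B x y = B y x) (hpos : ∀ x : V, x ≠ 0 → 0 < B x x)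
    (h2 : TwoStepNilpotent V)
    (T : V →ₗ[ℝ] V) (hT : IsKY B T) (hbij : Function.Bijective T) :
    ∃ J : V →ₗ[ℝ] V, (∀ x : V, J (J x) = -x) ∧
      (∀ x y : V, B (J x) y = - B x (J y)) ∧
      (∀ x y : V, B (J x) (J y) = B x y) ∧
      (∀ x y : V, J ⁅x, y⁆ = ⁅J x, y⁆) := by
  exact statement_9_general hsymm hpos hT.1 hbij.injective three_pos (hT.apply_lie hsymm hpos)
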